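/- arXiv:2409.10182 — 2 statements merged into one kernel-verified Lean document; each statement's English description precedes it below -/
import Mathlib

section
/- For any operator A on ℂ^d ⊗ ℂ^d, the second-order twirl M_2(A) = ∫_{U(d)} u^{†⊗2} A u^{⊗2} dμ(u) equals (Tr(A)/(d²-1) − Tr(AF)/(d(d²-1))) I + (Tr(AF)/(d²-1) − Tr(A)/(d(d²-1))) F, where F is the swap operator. -/
open MeasureTheory Matrix
open scoped Kronecker

noncomputable instance matrixMeasurableSpace {m n : Type*} :
    MeasurableSpace (Matrix m n ℂ) :=
  inferInstanceAs (MeasurableSpace (m → n → ℂ))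

/-- The swap operator `F` on `ℂ^d ⊗ ℂ^d`. -/
noncomputable def swapM (d : ℕ) : Matrix (Fin d × Fin d) (Fin d × Fin d) ℂ :=
  Matrix.of fun r c => if r = Prod.swap c then 1 else 0

/-!
A Haar measure on a compact group is also right invariant, so the twirl of `A` commutes with every
`u ⊗ u`. By Schur–Weyl duality it is then `β • 1 + γ • F`, and `β`, `γ` are found by
comparing the traces against `1` and `F`, which twirling preserves.

For the duality, let `B` commute with every `u ⊗ u`. Since `1 - P + z • P` is unitary for a
projection `P` and `‖z‖ = 1`, comparing `z = 1, -1, I` shows that `B` commutes with `P ⊗ 1 + 1 ⊗ P`.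
Projections span all matrices, so `B` commutes with all `X ⊗ 1 + 1 ⊗ X`, hence with all
`X ⊗ Y + Y ⊗ X`, and for `a ≠ b` such operators carry `e_a ⊗ e_b` to every other basis vector.
-/

lemma isMulRightInvariant_of_isMulLeftInvariant {G : Type*} [Group G] [MeasurableSpace G]
    [MeasurableMul₂ G] [MeasurableInv G] (μ : Measure G) [IsProbabilityMeasure μ]
    [μ.IsMulLeftInvariant] : μ.IsMulRightInvariant where
  map_mul_right_eq_self g := by
    have : IsProbabilityMeasure (μ.map (· * g)) :=
      Measure.isProbabilityMeasure_map (measurable_mul_const g).aemeasurable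
    simpa using measure_eq_div_smul (μ.map (· * g)) μ (s := Set.univ) (by simp) (by simp)

section Twirl

variable {G E : Type*} [Group G] [MeasurableSpace G] [CStarAlgebra E]

/-- The twirl of `a` along the unitary representation `ρ`: the average over `μ` of the conjugates
`ρ(g)† a ρ(g)`. It takes the value `0` if the integrand is not integrable. -/
noncomputable def twirl (μ : Measure G) (ρ : G →* unitary E) (a : E) : E :=
  ∫ g, star (ρ g : E) * a * ρ g ∂μ

variable {μ : Measure G} {ρ : G →* unitary E}

lemma integrable_star_mul_mul [IsFiniteMeasure μ]
    (hρ : AEStronglyMeasurable (fun g => (ρ g : E)) μ) (a : E) :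
    Integrable (fun g => star (ρ g : E) * a * ρ g) μ := by
  refine .of_bound ((hρ.star.mul_const a).mul hρ) ‖a‖ (.of_forall fun g => ?_)
  rw [CStarRing.norm_mul_coe_unitary, ← Unitary.coe_star, CStarRing.norm_coe_unitary_mul]

lemma commute_twirl [MeasurableMul G] [IsFiniteMeasure μ] [μ.IsMulRightInvariant]
    (hρ : AEStronglyMeasurable (fun g => (ρ g : E)) μ) (a : E) (h : G) :
    Commute (twirl μ ρ a) (ρ h) := by
  have conj_twirl : star (ρ h : E) * twirl μ ρ a * ρ h = twirl μ ρ a := by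
    have hint := integrable_star_mul_mul hρ a
    calc star (ρ h : E) * twirl μ ρ a * ρ h
        = ∫ g, star (ρ h : E) * (star (ρ g : E) * a * ρ g) * ρ h ∂μ := by
          rw [integral_mul_const_of_integrable (hint.const_mul _),
            integral_const_mul_of_integrable hint, twirl]
      _ = ∫ g, star (ρ (g * h) : E) * a * ρ (g * h) ∂μ := by
          simp only [map_mul, Submonoid.coe_mul, star_mul, mul_assoc]
      _ = twirl μ ρ a := integral_mul_right_eq_self (fun g => star (ρ g : E) * a * ρ g) h
  calc twirl μ ρ a * ρ h = ρ h * (star (ρ h : E) * twirl μ ρ a * ρ h) := by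
        rw [← mul_assoc, ← mul_assoc, Unitary.mul_star_self_of_mem (ρ h).2, one_mul]
    _ = ρ h * twirl μ ρ a := by rw [conj_twirl]

lemma map_twirl_mul [IsProbabilityMeasure μ] {F : Type*} [NormedAddCommGroup F] [NormedSpace ℂ F]
    [CompleteSpace F] (hρ : AEStronglyMeasurable (fun g => (ρ g : E)) μ) {φ : E →L[ℂ] F}
    (hφ : ∀ x y, φ (x * y) = φ (y * x)) {c : E} (hc : ∀ g, Commute c (ρ g : E)) (a : E) :
    φ (twirl μ ρ a * c) = φ (a * c) := by
  have hint := integrable_star_mul_mul hρ a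
  have map_conj_mul (g : G) : φ (star (ρ g : E) * a * ρ g * c) = φ (a * c) := by
    rw [mul_assoc, ← (hc g).eq, mul_assoc, hφ, mul_assoc, mul_assoc,
      Unitary.mul_star_self_of_mem (ρ g).2, mul_one]
  rw [twirl, ← integral_mul_const_of_integrable hint, ← φ.integral_comp_comm (hint.mul_const c)]
  simp only [map_conj_mul, integral_const, probReal_univ, one_smul]

end Twirl

section TensorSwap

variable {n : Type*} [Fintype n] [DecidableEq n]

/-- The operator `F` on `Rⁿ ⊗ Rⁿ` exchanging the two tensor factors. -/
def tensorSwap (n R : Type*) [DecidableEq n] [Zero R] [One R] : Matrix (n × n) (n × n) R :=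
  Equiv.Perm.permMatrix R (Equiv.prodComm n n)

omit [Fintype n] in
lemma tensorSwap_apply {R : Type*} [Zero R] [One R] (p q : n × n) :
    tensorSwap n R p q = if p = q.swap then 1 else 0 := by
  simp [tensorSwap, PEquiv.toMatrix_apply, Prod.swap_eq_iff_eq_swap]

lemma tensorSwap_mul_self {R : Type*} [NonAssocSemiring R] :
    tensorSwap n R * tensorSwap n R = 1 := by
  rw [tensorSwap, ← permMatrix_mul, ← permMatrix_one]
  rfl

lemma trace_tensorSwap {R : Type*} [NonAssocSemiring R] :
    (tensorSwap n R).trace = Fintype.card n := by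
  simp [trace, tensorSwap_apply, Fintype.sum_prod_type, Prod.ext_iff, ite_and]

lemma tensorSwap_mul_kronecker {R : Type*} [CommSemiring R] (X Y : Matrix n n R) :
    tensorSwap n R * X ⊗ₖ Y = Y ⊗ₖ X * tensorSwap n R := by
  ext ⟨i, j⟩ ⟨k, l⟩
  simp [tensorSwap, PEquiv.toMatrix_toPEquiv_mul, PEquiv.mul_toMatrix_toPEquiv, mul_comm]

end TensorSwap

section SchurWeyl

lemma one_sub_add_smul_mem_unitary {R A : Type*} [CommRing R] [StarRing R] [Ring A] [StarRing A]
    [Algebra R A] [StarModule R A] {p : A} (hp : IsStarProjection p) {z : R} (hz : z ∈ unitary R) :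
    1 - p + z • p ∈ unitary A := by
  have hzz := Unitary.star_mul_self_of_mem hz
  have hzz' := Unitary.mul_star_self_of_mem hz
  simp [Unitary.mem_iff, hp.isSelfAdjoint.star_eq, add_mul, mul_add, hp.mul_one_sub_self,
    hp.one_sub_mul_self, hp.isIdempotentElem.eq, hp.one_sub.isIdempotentElem.eq, smul_smul,
    hzz, hzz']

variable {n : Type*} [Fintype n] [DecidableEq n]

omit [DecidableEq n] in
lemma span_isStarProjection_eq_top :
    Submodule.span ℂ {P : Matrix n n ℂ | IsStarProjection P} = ⊤ := by
  classical
  rw [eq_top_iff, ← span_selfAdjoint, Submodule.span_le]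
  intro H hH
  have hH : H.IsHermitian := hH
  have isStarProjection_single (i : n) : IsStarProjection (single i i (1 : ℂ)) :=
    ⟨by simp [IsIdempotentElem], by simp [IsSelfAdjoint, star_eq_conjTranspose]⟩
  rw [hH.spectral_theorem, ← sum_single_eq_diagonal, map_sum]
  refine Submodule.sum_mem _ fun i _ => ?_
  rw [← mul_one ((RCLike.ofReal ∘ hH.eigenvalues) i), ← smul_eq_mul, ← smul_single, map_smul]
  exact Submodule.smul_mem _ _ (Submodule.subset_span ((isStarProjection_single i).map _))

variable {B : Matrix (n × n) (n × n) ℂ}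

lemma commute_kronecker_one_add_of_isStarProjection
    (hB : ∀ u ∈ unitaryGroup n ℂ, Commute B (u ⊗ₖ u)) {P : Matrix n n ℂ}
    (hP : IsStarProjection P) : Commute B (P ⊗ₖ 1 + 1 ⊗ₖ P) := by
  set u : ℂ → Matrix n n ℂ := fun z => 1 - P + z • P with hu
  have hBu (z : ℂ) (hz : z ∈ unitary ℂ) : Commute B (u z ⊗ₖ u z) :=
    hB _ (one_sub_add_smul_mem_unitary hP hz)
  have expand (z : ℂ) : u z ⊗ₖ u z = (1 - P) ⊗ₖ (1 - P)
      + z • ((1 - P) ⊗ₖ P + P ⊗ₖ (1 - P)) + z ^ 2 • P ⊗ₖ P := by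
    simp only [hu, add_kronecker, kronecker_add, smul_kronecker, kronecker_smul]
    module
  have key : P ⊗ₖ 1 + 1 ⊗ₖ P = (2⁻¹ : ℂ) • ((2 + Complex.I) • (u 1 ⊗ₖ u 1)
      - Complex.I • (u (-1) ⊗ₖ u (-1)) - (2 : ℂ) • (u Complex.I ⊗ₖ u Complex.I)) := by
    rw [expand, expand, expand, Complex.I_sq]
    nth_rw 1 [← sub_add_cancel 1 P]
    nth_rw 2 [← sub_add_cancel 1 P]
    rw [add_kronecker, kronecker_add]
    module
  rw [key]
  refine .smul_right (.sub_right (.sub_right ?_ ?_) ?_) _ <;>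
    exact .smul_right (hBu _ (by simp [Unitary.mem_iff])) _

lemma commute_kronecker_one_add (hB : ∀ u ∈ unitaryGroup n ℂ, Commute B (u ⊗ₖ u))
    (X : Matrix n n ℂ) : Commute B (X ⊗ₖ 1 + 1 ⊗ₖ X) := by
  induction (span_isStarProjection_eq_top (n := n) ▸ Submodule.mem_top :
      X ∈ Submodule.span ℂ {P | IsStarProjection P}) using Submodule.span_induction with
  | mem P hP => exact commute_kronecker_one_add_of_isStarProjection hB hP
  | zero => simp
  | add X Y _ _ hX hY =>
    rw [add_kronecker, kronecker_add, add_add_add_comm]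
    exact hX.add_right hY
  | smul c X _ hX =>
    rw [smul_kronecker, kronecker_smul, ← smul_add]
    exact hX.smul_right c

lemma commute_kronecker_add_kronecker (hB : ∀ u ∈ unitaryGroup n ℂ, Commute B (u ⊗ₖ u))
    (X Y : Matrix n n ℂ) : Commute B (X ⊗ₖ Y + Y ⊗ₖ X) := by
  have key : X ⊗ₖ Y + Y ⊗ₖ X
      = (X ⊗ₖ 1 + 1 ⊗ₖ X) * (Y ⊗ₖ 1 + 1 ⊗ₖ Y) - ((X * Y) ⊗ₖ 1 + 1 ⊗ₖ (X * Y)) := by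
    simp only [add_mul, mul_add, ← mul_kronecker_mul, one_mul, mul_one]
    abel
  rw [key]
  exact ((commute_kronecker_one_add hB X).mul_right (commute_kronecker_one_add hB Y)).sub_right
    (commute_kronecker_one_add hB (X * Y))

lemma exists_eq_smul_one_add_smul_tensorSwap {R : Type*} [CommSemiring R] [Nontrivial n]
    {B : Matrix (n × n) (n × n) R} (hB : ∀ X Y : Matrix n n R, Commute B (X ⊗ₖ Y + Y ⊗ₖ X)) :
    ∃ β γ : R, B = β • 1 + γ • tensorSwap n R := by
  obtain ⟨a, b, hab⟩ := exists_pair_ne n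
  refine ⟨B (a, b) (a, b), B (b, a) (a, b), ?_⟩
  ext p ⟨c, e⟩
  have h := congrFun₂ (hB (single c a 1) (single e b 1)).eq p (a, b)
  rw [single_kronecker_single, single_kronecker_single, mul_one, mul_add, add_mul,
    Matrix.add_apply, Matrix.add_apply] at h
  have single_mul_apply (i j : n × n) :
      (single i j 1 * B : Matrix (n × n) (n × n) R) p (a, b) = if p = i then B j (a, b) else 0 := by
    split_ifs with hp
    · rw [hp, single_mul_apply_same, one_mul]
    · exact single_mul_apply_of_ne _ _ _ _ _ hp B
  have hne : (a, b) ≠ (b, a) := fun h => hab (congrArg Prod.fst h)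
  calc B p (c, e)
      = (B * single (c, e) (a, b) 1 : Matrix (n × n) (n × n) R) p (a, b)
        + (B * single (e, c) (b, a) 1 : Matrix (n × n) (n × n) R) p (a, b) := by
        rw [mul_single_apply_same, mul_single_apply_of_ne _ _ _ _ _ hne, mul_one, add_zero]
    _ = _ := h
    _ = _ := by simp [single_mul_apply, one_apply, tensorSwap_apply]

end SchurWeyl

section TensorSquare

variable {n : Type*} [Fintype n] [DecidableEq n]

/-- The second tensor power `u ↦ u ⊗ u` of the defining representation of the unitary group. -/
def tensorSquare {R : Type*} [CommRing R] [StarRing R] :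
    unitaryGroup n R →* unitaryGroup (n × n) R where
  toFun u := ⟨(u : Matrix n n R) ⊗ₖ (u : Matrix n n R), kronecker_mem_unitary u.2 u.2⟩
  map_one' := Subtype.ext one_kronecker_one
  map_mul' _ _ := Subtype.ext (mul_kronecker_mul _ _ _ _)

lemma coe_tensorSquare {R : Type*} [CommRing R] [StarRing R] (u : unitaryGroup n R) :
    (tensorSquare u : Matrix (n × n) (n × n) R) = (u : Matrix n n R) ⊗ₖ (u : Matrix n n R) :=
  rfl

instance borelSpace_matrix {m n : Type*} [Countable m] [Countable n] : BorelSpace (Matrix m n ℂ) :=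
  inferInstanceAs (BorelSpace (m → n → ℂ))

open scoped Matrix.Norms.L2Operator

lemma stronglyMeasurable_tensorSquare :
    StronglyMeasurable fun u : unitaryGroup n ℂ => (tensorSquare u : Matrix (n × n) (n × n) ℂ) :=
  Continuous.stronglyMeasurable <| continuous_matrix fun p q =>
    (continuous_subtype_val.matrix_elem p.1 q.1).mul (continuous_subtype_val.matrix_elem p.2 q.2)

variable (μ : Measure (unitaryGroup n ℂ)) [IsProbabilityMeasure μ]

lemma twirl_tensorSquare_apply (A : Matrix (n × n) (n × n) ℂ) (p q : n × n) :
    twirl μ tensorSquare A p q = ∫ u, ((star (u : Matrix n n ℂ) ⊗ₖ star (u : Matrix n n ℂ)) * A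
      * ((u : Matrix n n ℂ) ⊗ₖ (u : Matrix n n ℂ))) p q ∂μ := by
  have hint := integrable_star_mul_mul
    (stronglyMeasurable_tensorSquare.aestronglyMeasurable (μ := μ)) A
  let entry : Matrix (n × n) (n × n) ℂ →L[ℂ] ℂ := (entryLinearMap ℂ ℂ p q).toContinuousLinearMap
  refine (entry.integral_comp_comm hint).symm.trans (integral_congr_ae (.of_forall fun u => ?_))
  simp only [coe_tensorSquare, star_eq_conjTranspose, conjTranspose_kronecker]
  rfl

lemma commute_twirl_tensorSquare [μ.IsMulRightInvariant] (A : Matrix (n × n) (n × n) ℂ)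
    {u : Matrix n n ℂ} (hu : u ∈ unitaryGroup n ℂ) :
    Commute (twirl μ tensorSquare A) (u ⊗ₖ u) :=
  commute_twirl (E := Matrix (n × n) (n × n) ℂ) (ρ := tensorSquare)
    stronglyMeasurable_tensorSquare.aestronglyMeasurable A ⟨u, hu⟩

lemma trace_twirl_tensorSquare_mul {C : Matrix (n × n) (n × n) ℂ}
    (hC : ∀ u ∈ unitaryGroup n ℂ, Commute C (u ⊗ₖ u)) (A : Matrix (n × n) (n × n) ℂ) :
    (twirl μ tensorSquare A * C).trace = (A * C).trace :=
  map_twirl_mul (E := Matrix (n × n) (n × n) ℂ) (ρ := tensorSquare)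
    (φ := (traceLinearMap (n × n) ℂ ℂ).toContinuousLinearMap)
    stronglyMeasurable_tensorSquare.aestronglyMeasurable (fun X Y => trace_mul_comm X Y)
    (fun u => hC u u.2) A

theorem stmt_9_general [Nontrivial n] [μ.IsMulLeftInvariant] (A : Matrix (n × n) (n × n) ℂ) :
    twirl μ tensorSquare A
      = (A.trace / ((Fintype.card n : ℂ) ^ 2 - 1)
          - (A * tensorSwap n ℂ).trace / (Fintype.card n * ((Fintype.card n : ℂ) ^ 2 - 1))) • 1
        + ((A * tensorSwap n ℂ).trace / ((Fintype.card n : ℂ) ^ 2 - 1)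
          - A.trace / (Fintype.card n * ((Fintype.card n : ℂ) ^ 2 - 1))) • tensorSwap n ℂ := by
  have := isMulRightInvariant_of_isMulLeftInvariant μ
  obtain ⟨β, γ, htwirl⟩ := exists_eq_smul_one_add_smul_tensorSwap
    (commute_kronecker_add_kronecker fun _ => commute_twirl_tensorSquare μ A)
  have trace_eq : β * Fintype.card n ^ 2 + γ * Fintype.card n = A.trace := by
    simpa [htwirl, trace_tensorSwap, sq] using
      trace_twirl_tensorSquare_mul μ (fun _ _ => .one_left _) A
  have trace_mul_swap_eq :
      β * Fintype.card n + γ * Fintype.card n ^ 2 = (A * tensorSwap n ℂ).trace := by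
    simpa [htwirl, add_mul, tensorSwap_mul_self, trace_tensorSwap, sq] using
      trace_twirl_tensorSquare_mul μ (fun u _ => tensorSwap_mul_kronecker u u) A
  have card_sq_sub_one_ne_zero : (Fintype.card n : ℂ) ^ 2 - 1 ≠ 0 := by
    have : (1 : ℝ) < Fintype.card n := mod_cast Fintype.one_lt_card
    exact_mod_cast (by nlinarith : (0 : ℝ) < (Fintype.card n : ℝ) ^ 2 - 1).ne'
  rw [htwirl, ← trace_eq, ← trace_mul_swap_eq]
  congr 2 <;> field_simp <;> ring

end TensorSquare

lemma swapM_eq_tensorSwap (d : ℕ) : swapM d = tensorSwap (Fin d) ℂ := by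
  ext p q
  simp [swapM, tensorSwap_apply]

/-- The second-order twirl: for any `A` on `ℂ^d ⊗ ℂ^d` and Haar (left-invariant
probability) measure on `U(d)`,
`∫ u^{†⊗2} A u^{⊗2} dμ(u) = (Tr(A)/(d²-1) − Tr(AF)/(d(d²-1))) I
  + (Tr(AF)/(d²-1) − Tr(A)/(d(d²-1))) F`. -/
theorem stmt_9 (d : ℕ) (hd : 2 ≤ d)
    (A : Matrix (Fin d × Fin d) (Fin d × Fin d) ℂ)
    (μ : Measure ↥(Matrix.unitaryGroup (Fin d) ℂ)) [IsProbabilityMeasure μ]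
    (hinv : ∀ v : Matrix.unitaryGroup (Fin d) ℂ,
      Measure.map (fun u => v * u) μ = μ) :
    ∀ p q : Fin d × Fin d,
      (∫ u, (((star (u : Matrix (Fin d) (Fin d) ℂ)) ⊗ₖ (star (u : Matrix (Fin d) (Fin d) ℂ)))
          * A * ((u : Matrix (Fin d) (Fin d) ℂ) ⊗ₖ (u : Matrix (Fin d) (Fin d) ℂ))) p q ∂μ)
        = ((Matrix.trace A / ((d : ℂ) ^ 2 - 1)
              - Matrix.trace (A * swapM d) / ((d : ℂ) * ((d : ℂ) ^ 2 - 1))) •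
            (1 : Matrix (Fin d × Fin d) (Fin d × Fin d) ℂ)
          + (Matrix.trace (A * swapM d) / ((d : ℂ) ^ 2 - 1)
              - Matrix.trace A / ((d : ℂ) * ((d : ℂ) ^ 2 - 1))) • swapM d) p q := by
  intro p q
  have : Nontrivial (Fin d) := Fin.nontrivial_iff_two_le.mpr hd
  have : μ.IsMulLeftInvariant := ⟨hinv⟩
  rw [← twirl_tensorSquare_apply, stmt_9_general μ A, Fintype.card_fin, swapM_eq_tensorSwap]
end

section
/- For the Circular Orthogonal Ensemble on U(d) (symmetric unitary matrices W = u^T u with u Haar on U(d)) and any d×d matrix P, the average of W† P W equals (P^T + Tr(P)·I)/(d+1). -/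
open MeasureTheory Matrix

/-!
Fix four columns `a, i, b, j`. Left invariance of `μ` and transitivity of `U(d)` on the sphere make
the expectation of `x̄_a x̄_i x_b x_j` at `x = y ᵥ* u` equal to `c * ‖y‖⁴` for one constant `c`.
Polarize this along `y = e_k + ω e_l` with `k ≠ l`; comparing `ω = 1` with `ω = i`, the four moments
with one conjugated and one unconjugated entry in each of the rows `k, l` sum to `2 c`, and the two
moments with both conjugated entries in one row and both unconjugated ones in the other cancel.
Summing over all rows, orthonormality of the columns gives
`d (d + 1) c = δ_ab δ_ij + δ_aj δ_ib`, while `E[W̄_ai W_bj]`, where `W = uᵀu`, collapses to `d c`.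
-/

instance matrixBorelSpace {m n : Type*} [Countable m] [Countable n] :
    BorelSpace (Matrix m n ℂ) :=
  inferInstanceAs (BorelSpace (m → n → ℂ))

section MatrixEntries

variable {n R : Type*} [Fintype n]

lemma star_mul_mul_apply [CommSemiring R] [Star R] (W P : Matrix n n R) (i j : n) :
    (star W * P * W) i j = ∑ b, ∑ a, P a b * (star (W a i) * W b j) := by
  simp only [mul_apply, star_apply, Finset.sum_mul]
  exact Finset.sum_congr rfl fun b _ => Finset.sum_congr rfl fun a _ => by ring

variable [DecidableEq n] [CommRing R] [StarRing R]

lemma unitaryGroup_star_row_dotProduct_row (u : unitaryGroup n R) (k l : n) :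
    star (u k) ⬝ᵥ u l = (1 : Matrix n n R) k l := by
  have h := congrFun₂ (mem_unitaryGroup_iff.mp u.2) l k
  simpa [mul_apply, dotProduct, one_apply, mul_comm, eq_comm] using h

lemma unitaryGroup_sum_star_mul (u : unitaryGroup n R) (a b : n) :
    ∑ k, star (u k a) * u k b = (1 : Matrix n n R) a b :=
  congrFun₂ (mem_unitaryGroup_iff'.mp u.2) a b

end MatrixEntries

section UnitaryGroup

variable {n : Type*} [Fintype n] [DecidableEq n] {𝕜 : Type*} [RCLike 𝕜]

instance compactSpace_unitaryGroup : CompactSpace (unitaryGroup n 𝕜) := by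
  have hcube : IsCompact
      (Set.univ.pi fun _ : n => Set.univ.pi fun _ : n => Metric.closedBall (0 : 𝕜) 1) :=
    isCompact_univ_pi fun _ => isCompact_univ_pi fun _ => isCompact_closedBall 0 1
  have hclosed := isClosed_unitary (R := Matrix n n 𝕜)
  refine isCompact_iff_compactSpace.mp (hcube.of_isClosed_subset hclosed ?_)
  intro u hu k _ l _
  simpa using entry_norm_bound_of_unitary hu k l

@[fun_prop]
lemma continuous_unitaryGroup_apply (k l : n) :
    Continuous fun u : unitaryGroup n 𝕜 => u k l :=
  continuous_subtype_val.matrix_elem k l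

lemma exists_unitary_row_eq_smul (y : n → 𝕜) (k : n) :
    ∃ (v : unitaryGroup n 𝕜) (r : ℝ), y = r • v k := by
  rcases eq_or_ne y 0 with rfl | hy
  · exact ⟨1, 0, by simp⟩
  let e : EuclideanSpace 𝕜 n := WithLp.toLp 2 y
  have he : (‖e‖ : 𝕜) ≠ 0 := by simpa [e] using hy
  have hunit : Orthonormal 𝕜 (({k} : Set n).domRestrict fun _ => (‖e‖ : 𝕜)⁻¹ • e) :=
    ⟨fun _ => norm_smul_inv_norm (by simpa using he), fun _ _ h => (h (Subsingleton.elim _ _)).elim⟩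
  obtain ⟨B, hB⟩ := hunit.exists_orthonormalBasis_extension_of_card_eq (by simp)
  let E := EuclideanSpace.basisFun n 𝕜
  refine ⟨⟨(E.toBasis.toMatrix B)ᵀ,
    transpose_mem_unitaryGroup_iff.mpr (E.toMatrix_orthonormalBasis_mem_unitary B)⟩, ‖e‖, ?_⟩
  ext m
  simp [E, Module.Basis.toMatrix_apply, hB k rfl, RCLike.real_smul_eq_coe_mul, he, e]

end UnitaryGroup

section QuarticForm

variable {n : Type*}

/-- The monomial `x̄_a ȳ_i z_b w_j` in the coordinates of four vectors, conjugate-linear in `x`, `y`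
and linear in `z`, `w`. Evaluated at rows of a unitary matrix it gives the products of entries in
`W̄_{ai} W_{bj}`, where `W = uᵀu`. -/
def quarticForm (a i b j : n) (x y z w : n → ℂ) : ℂ :=
  star (x a) * star (y i) * z b * w j

lemma quarticForm_smul (a i b j : n) (r : ℝ) (x : n → ℂ) :
    quarticForm a i b j (r • x) (r • x) (r • x) (r • x) =
      (r : ℂ) ^ 4 * quarticForm a i b j x x x x := by
  simp only [quarticForm, Pi.smul_apply, Complex.real_smul, star_mul', RCLike.star_def,
    Complex.conj_ofReal]
  ring

lemma quarticForm_add_add_quarticForm_sub (a i b j : n) (x y : n → ℂ) (ω : ℂ) :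
    quarticForm a i b j (x + ω • y) (x + ω • y) (x + ω • y) (x + ω • y) +
        quarticForm a i b j (x - ω • y) (x - ω • y) (x - ω • y) (x - ω • y) =
      2 * (quarticForm a i b j x x x x + (star ω * ω) ^ 2 * quarticForm a i b j y y y y +
        star ω * ω * (quarticForm a i b j x y x y + quarticForm a i b j x y y x +
          quarticForm a i b j y x x y + quarticForm a i b j y x y x) +
        (ω ^ 2 * quarticForm a i b j x x y y + star ω ^ 2 * quarticForm a i b j y y x x)) := by
  simp only [quarticForm, Pi.add_apply, Pi.sub_apply, Pi.smul_apply, smul_eq_mul, star_add,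
    star_sub, star_mul']
  ring

end QuarticForm

section FourthMoment

variable {n : Type*} [Fintype n] [DecidableEq n] (μ : Measure (unitaryGroup n ℂ)) (a i b j : n)

/-- The mixed fourth moment `E[ū_{ka} ū_{li} u_{pb} u_{qj}]` of the entries of a random unitary
matrix. The columns `a i b j` come first because they stay fixed while invariance acts on the rows
`k l p q`. -/
noncomputable def fourthMoment (k l p q : n) : ℂ :=
  ∫ u, quarticForm a i b j (u k) (u l) (u p) (u q) ∂μ

@[fun_prop]
lemma integrable_quarticForm_row [IsFiniteMeasure μ] (k l p q : n) :
    Integrable (fun u : unitaryGroup n ℂ => quarticForm a i b j (u k) (u l) (u p) (u q)) μ := by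
  have hcont : Continuous fun u : unitaryGroup n ℂ =>
      quarticForm a i b j (u k) (u l) (u p) (u q) := by
    unfold quarticForm
    fun_prop
  exact hcont.integrable_of_hasCompactSupport (.of_compactSpace _)

lemma integral_quarticForm_vecMul [μ.IsMulLeftInvariant] (y : n → ℂ) (k : n) :
    ∫ u : unitaryGroup n ℂ, quarticForm a i b j (y ᵥ* u) (y ᵥ* u) (y ᵥ* u) (y ᵥ* u) ∂μ =
      (star y ⬝ᵥ y) ^ 2 * fourthMoment μ a i b j k k k k := by
  obtain ⟨v, r, rfl⟩ := exists_unitary_row_eq_smul y k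
  have hnorm : star (r • v k) ⬝ᵥ (r • v k) = (r : ℂ) ^ 2 := by
    simp [unitaryGroup_star_row_dotProduct_row, sq]
  calc
    _ = ∫ u, (r : ℂ) ^ 4 *
        quarticForm a i b j ((v * u) k) ((v * u) k) ((v * u) k) ((v * u) k) ∂μ := by
      simp only [smul_vecMul, quarticForm_smul, UnitaryGroup.mul_apply, mul_apply_eq_vecMul]
    _ = (r : ℂ) ^ 4 * fourthMoment μ a i b j k k k k := by
      rw [integral_const_mul, integral_mul_left_eq_self
        (fun u : unitaryGroup n ℂ => quarticForm a i b j (u k) (u k) (u k) (u k)) v, fourthMoment]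
    _ = _ := by rw [hnorm]; ring

lemma fourthMoment_kkkk_eq_llll [μ.IsMulLeftInvariant] (k l : n) :
    fourthMoment μ a i b j k k k k = fourthMoment μ a i b j l l l l := by
  simpa [single_one_vecMul, Matrix.row, fourthMoment] using
    integral_quarticForm_vecMul μ a i b j (Pi.single k 1) l

lemma integral_quarticForm_row_add_smul_row [μ.IsMulLeftInvariant] {k l : n} (hkl : k ≠ l) {ω : ℂ}
    (hω : star ω * ω = 1) :
    ∫ u : unitaryGroup n ℂ, quarticForm a i b j
        (u k + ω • u l) (u k + ω • u l) (u k + ω • u l) (u k + ω • u l) ∂μ =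
      4 * fourthMoment μ a i b j k k k k := by
  let y : n → ℂ := Pi.single k 1 + ω • Pi.single l 1
  have hnorm : star y ⬝ᵥ y = 2 := by
    calc
      _ = 1 + star ω * ω := by simp [y, hkl, hkl.symm, mul_comm]
      _ = 2 := by rw [hω, one_add_one_eq_two]
  have hrow (u : unitaryGroup n ℂ) : y ᵥ* u = u k + ω • u l := by
    simp only [y, add_vecMul, smul_vecMul, single_one_vecMul, Matrix.row]
  have h := integral_quarticForm_vecMul μ a i b j y k
  simp only [hrow, hnorm] at h
  exact h.trans (by norm_num)

lemma fourthMoment_polarization [μ.IsMulLeftInvariant] [IsFiniteMeasure μ] {k l : n}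
    (hkl : k ≠ l) {ω : ℂ} (hω : star ω * ω = 1) :
    (fourthMoment μ a i b j k l k l + fourthMoment μ a i b j k l l k +
          fourthMoment μ a i b j l k k l + fourthMoment μ a i b j l k l k) +
        (ω ^ 2 * fourthMoment μ a i b j k k l l + star ω ^ 2 * fourthMoment μ a i b j l l k k) =
      2 * fourthMoment μ a i b j k k k k := by
  have hint (c : ℂ) : Integrable (fun u : unitaryGroup n ℂ => quarticForm a i b j
        (u k + c • u l) (u k + c • u l) (u k + c • u l) (u k + c • u l)) μ := by
    refine Continuous.integrable_of_hasCompactSupport ?_ (.of_compactSpace _)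
    simp only [quarticForm, Pi.add_apply, Pi.smul_apply]
    fun_prop
  have hpolar := congrArg (fun f => ∫ u, f u ∂μ) <| funext fun u : unitaryGroup n ℂ =>
    quarticForm_add_add_quarticForm_sub a i b j (u k) (u l) ω
  simp only [hω, sub_eq_add_neg, ← neg_smul] at hpolar
  rw [integral_add (hint _) (hint _), integral_quarticForm_row_add_smul_row μ a i b j hkl hω,
    integral_quarticForm_row_add_smul_row μ a i b j hkl (by simpa using hω)] at hpolar
  simp (disch := fun_prop) only [integral_add, integral_const_mul] at hpolar
  have hdiag := fourthMoment_kkkk_eq_llll μ a i b j k l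
  simp only [fourthMoment] at hpolar hdiag ⊢
  linear_combination hdiag - hpolar / 2

lemma fourthMoment_klkl_add_kllk_add_lkkl_add_lklk [μ.IsMulLeftInvariant] [IsFiniteMeasure μ]
    (k l : n) :
    fourthMoment μ a i b j k l k l + fourthMoment μ a i b j k l l k +
        fourthMoment μ a i b j l k k l + fourthMoment μ a i b j l k l k =
      2 * fourthMoment μ a i b j k k k k * (1 + (1 : Matrix n n ℂ) k l) := by
  rcases eq_or_ne k l with rfl | hkl
  · rw [one_apply_eq]
    ring
  · have h₁ := fourthMoment_polarization μ a i b j hkl (ω := 1) (by simp)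
    have hI := fourthMoment_polarization μ a i b j hkl (ω := Complex.I) (by simp)
    simp only [star_one, RCLike.star_def, Complex.conj_I, neg_sq, Complex.I_sq] at h₁ hI
    rw [one_apply_ne hkl]
    linear_combination (h₁ + hI) / 2

lemma fourthMoment_kkll_add_llkk [μ.IsMulLeftInvariant] [IsFiniteMeasure μ] (k l : n) :
    fourthMoment μ a i b j k k l l + fourthMoment μ a i b j l l k k =
      2 * fourthMoment μ a i b j k k k k * (1 : Matrix n n ℂ) k l := by
  rcases eq_or_ne k l with rfl | hkl
  · rw [one_apply_eq]
    ring
  · have h₁ := fourthMoment_polarization μ a i b j hkl (ω := 1) (by simp)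
    have hI := fourthMoment_polarization μ a i b j hkl (ω := Complex.I) (by simp)
    simp only [star_one, RCLike.star_def, Complex.conj_I, neg_sq, Complex.I_sq] at h₁ hI
    rw [one_apply_ne hkl]
    linear_combination (h₁ - hI) / 2

lemma sum_fourthMoment_klkl [IsProbabilityMeasure μ] :
    ∑ k, ∑ l, fourthMoment μ a i b j k l k l =
      (1 : Matrix n n ℂ) a b * (1 : Matrix n n ℂ) i j := by
  have hpoint (u : unitaryGroup n ℂ) :
      ∑ k, ∑ l, quarticForm a i b j (u k) (u l) (u k) (u l) =
        (1 : Matrix n n ℂ) a b * (1 : Matrix n n ℂ) i j := by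
    simp only [← unitaryGroup_sum_star_mul u, Finset.sum_mul_sum, quarticForm]
    exact Finset.sum_congr rfl fun k _ => Finset.sum_congr rfl fun l _ => by ring
  simp (disch := fun_prop) only [fourthMoment, ← integral_finsetSum, hpoint, integral_const,
    probReal_univ, one_smul]

lemma sum_fourthMoment_kllk [IsProbabilityMeasure μ] :
    ∑ k, ∑ l, fourthMoment μ a i b j k l l k =
      (1 : Matrix n n ℂ) a j * (1 : Matrix n n ℂ) i b := by
  rw [← sum_fourthMoment_klkl μ a i j b]
  simp only [fourthMoment, quarticForm, mul_right_comm]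

lemma card_mul_fourthMoment_kkkk [μ.IsMulLeftInvariant] [IsProbabilityMeasure μ] (m : n) :
    (Fintype.card n : ℂ) * (Fintype.card n + 1) * fourthMoment μ a i b j m m m m =
      (1 : Matrix n n ℂ) a b * (1 : Matrix n n ℂ) i j +
        (1 : Matrix n n ℂ) a j * (1 : Matrix n n ℂ) i b := by
  have hleft : ∑ k, ∑ l, (fourthMoment μ a i b j k l k l + fourthMoment μ a i b j k l l k +
      fourthMoment μ a i b j l k k l + fourthMoment μ a i b j l k l k) =
      2 * ((1 : Matrix n n ℂ) a b * (1 : Matrix n n ℂ) i j +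
        (1 : Matrix n n ℂ) a j * (1 : Matrix n n ℂ) i b) := by
    have hlklk : ∑ k, ∑ l, fourthMoment μ a i b j l k l k =
        ∑ k, ∑ l, fourthMoment μ a i b j k l k l := Finset.sum_comm
    have hlkkl : ∑ k, ∑ l, fourthMoment μ a i b j l k k l =
        ∑ k, ∑ l, fourthMoment μ a i b j k l l k := Finset.sum_comm
    simp only [Finset.sum_add_distrib, hlklk, hlkkl, sum_fourthMoment_klkl,
      sum_fourthMoment_kllk]
    ring
  have hright : ∑ k : n, ∑ l : n,
      2 * fourthMoment μ a i b j m m m m * (1 + (1 : Matrix n n ℂ) k l) =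
      2 * fourthMoment μ a i b j m m m m * (Fintype.card n * (Fintype.card n + 1)) := by
    simp only [← Finset.mul_sum, Finset.sum_add_distrib, one_apply, Finset.sum_const,
      Finset.card_univ, nsmul_eq_mul, mul_one, Finset.sum_ite_eq, Finset.mem_univ, if_true]
    ring
  simp only [fourthMoment_klkl_add_kllk_add_lkkl_add_lklk,
    fourthMoment_kkkk_eq_llll μ a i b j _ m, hright] at hleft
  linear_combination hleft / 2

lemma sum_fourthMoment_kkll [μ.IsMulLeftInvariant] [IsProbabilityMeasure μ] :
    ∑ k, ∑ l, fourthMoment μ a i b j k k l l =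
      ((Fintype.card n : ℂ) + 1)⁻¹ * ((1 : Matrix n n ℂ) a b * (1 : Matrix n n ℂ) i j +
        (1 : Matrix n n ℂ) a j * (1 : Matrix n n ℂ) i b) := by
  have hcomm : ∑ k, ∑ l, fourthMoment μ a i b j l l k k =
      ∑ k, ∑ l, fourthMoment μ a i b j k k l l := Finset.sum_comm
  have hsymm : 2 * ∑ k, ∑ l, fourthMoment μ a i b j k k l l =
      2 * (Fintype.card n * fourthMoment μ a i b j a a a a) := by
    calc
      _ = ∑ k, ∑ l, (fourthMoment μ a i b j k k l l + fourthMoment μ a i b j l l k k) := by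
        simp only [Finset.sum_add_distrib]
        rw [hcomm, two_mul]
      _ = ∑ k : n, ∑ l : n, 2 * fourthMoment μ a i b j a a a a * (1 : Matrix n n ℂ) k l := by
        simp only [fourthMoment_kkll_add_llkk, fourthMoment_kkkk_eq_llll μ a i b j _ a]
      _ = _ := by
        simp only [one_apply, ← Finset.mul_sum, Finset.sum_ite_eq, Finset.mem_univ, if_true,
          Finset.sum_const, Finset.card_univ, nsmul_eq_mul, mul_one]
  have hcard : (Fintype.card n : ℂ) + 1 ≠ 0 := Nat.cast_add_one_ne_zero _
  rw [mul_left_cancel₀ two_ne_zero hsymm, ← card_mul_fourthMoment_kkkk μ a i b j a]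
  field_simp

end FourthMoment

section CircularOrthogonalEnsemble

variable {n : Type*} [Fintype n] [DecidableEq n]

lemma star_mul_transpose_mul_self_apply (u : unitaryGroup n ℂ) (a i b j : n) :
    star ((u.1ᵀ * u.1) a i) * (u.1ᵀ * u.1) b j =
      ∑ k, ∑ l, quarticForm a i b j (u k) (u k) (u l) (u l) := by
  simp only [mul_apply, transpose_apply, star_sum, star_mul', Finset.sum_mul_sum, quarticForm,
    mul_assoc]

lemma integral_star_mul_transpose_mul_self (μ : Measure (unitaryGroup n ℂ))
    [μ.IsMulLeftInvariant] [IsProbabilityMeasure μ] (a i b j : n) :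
    ∫ u : unitaryGroup n ℂ, star ((u.1ᵀ * u.1) a i) * (u.1ᵀ * u.1) b j ∂μ =
      ((Fintype.card n : ℂ) + 1)⁻¹ * ((1 : Matrix n n ℂ) a b * (1 : Matrix n n ℂ) i j +
        (1 : Matrix n n ℂ) a j * (1 : Matrix n n ℂ) i b) := by
  simp (disch := fun_prop) only [star_mul_transpose_mul_self_apply, integral_finsetSum]
  exact sum_fourthMoment_kkll μ a i b j

theorem stmt_14_general (P : Matrix n n ℂ) (μ : Measure (unitaryGroup n ℂ))
    [μ.IsMulLeftInvariant] [IsProbabilityMeasure μ] (i j : n) :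
    ∫ u : unitaryGroup n ℂ, (star (u.1ᵀ * u.1) * P * (u.1ᵀ * u.1)) i j ∂μ =
      (((Fintype.card n : ℂ) + 1)⁻¹ • (Pᵀ + trace P • (1 : Matrix n n ℂ))) i j := by
  have hint (a b : n) : Integrable
      (fun u : unitaryGroup n ℂ => star ((u.1ᵀ * u.1) a i) * (u.1ᵀ * u.1) b j) μ := by
    simp only [star_mul_transpose_mul_self_apply]
    fun_prop
  calc
    _ = ∑ b, ∑ a, P a b * ∫ u : unitaryGroup n ℂ,
        star ((u.1ᵀ * u.1) a i) * (u.1ᵀ * u.1) b j ∂μ := by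
      simp (disch := fun_prop) only [star_mul_mul_apply, integral_finsetSum, integral_const_mul]
    _ = ((Fintype.card n : ℂ) + 1)⁻¹ * ∑ b, ∑ a, P a b *
        ((1 : Matrix n n ℂ) a b * (1 : Matrix n n ℂ) i j +
          (1 : Matrix n n ℂ) a j * (1 : Matrix n n ℂ) i b) := by
      simp only [integral_star_mul_transpose_mul_self, Finset.mul_sum, mul_left_comm]
    _ = _ := by
      simp [one_apply, mul_add, Finset.sum_add_distrib, trace, add_comm]

end CircularOrthogonalEnsemble

/-- For the Circular Orthogonal Ensemble on `U(d)` (matrices `W = uᵀu` with `u` Haar on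
`U(d)`, i.e. `u` distributed according to a left-invariant probability measure) and any
`d×d` matrix `P`: `E[W† P W] = (Pᵀ + Tr(P)·I)/(d+1)`. -/
theorem stmt_14 (d : ℕ) (P : Matrix (Fin d) (Fin d) ℂ)
    (μ : Measure ↥(Matrix.unitaryGroup (Fin d) ℂ)) [IsProbabilityMeasure μ]
    (hinv : ∀ v : Matrix.unitaryGroup (Fin d) ℂ,
      Measure.map (fun u => v * u) μ = μ) :
    ∀ i j : Fin d,
      (∫ u, (star ((u : Matrix (Fin d) (Fin d) ℂ)ᵀ * (u : Matrix (Fin d) (Fin d) ℂ)) * P *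
          ((u : Matrix (Fin d) (Fin d) ℂ)ᵀ * (u : Matrix (Fin d) (Fin d) ℂ))) i j ∂μ)
        = ((((d : ℂ) + 1)⁻¹) •
            (Pᵀ + Matrix.trace P • (1 : Matrix (Fin d) (Fin d) ℂ))) i j := by
  have : μ.IsMulLeftInvariant := ⟨hinv⟩
  simpa only [Fintype.card_fin] using stmt_14_general P μ
end
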